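/- Fix n ≥ 3. Let (X_1, ..., X_n) be a stationary two-state Markov chain on {0,1} with transition probabilities P(0→1) = 1/(n+1), P(0→0) = n/(n+1), P(1→1) = 2/(n+1), P(1→0) = (n−1)/(n+1), so that each X_i has the stationary Bernoulli(1/n) distribution. Then the distribution P_{S_n} of S_n = X_1 + ... + X_n satisfies D(P_{S_n} ‖ Po(1)) ≤ 3 (log n)/n + 1/n. -/

import Mathlib

open MeasureTheory ProbabilityTheory Real Filter

/-- The distribution (probability mass function) of a random variable `X`,
as a real-valued function: `distOf μ X a = μ(X = a)`. -/
noncomputable def distOf {Ω α : Type*} [MeasurableSpace Ω] (μ : Measure Ω) (X : Ω → α) (a : α) : ℝ :=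
  (μ {ω | X ω = a}).toReal

/-- Relative entropy `D(P‖Q) = ∑ₓ P(x) log (P(x)/Q(x))` (natural logarithm). -/
noncomputable def relEnt {α : Type*} (P Q : α → ℝ) : ℝ :=
  ∑' x, P x * Real.log (P x / Q x)

/-- Shannon entropy `H(P) = -∑ₓ P(x) log P(x)` (natural logarithm). -/
noncomputable def entH {α : Type*} (P : α → ℝ) : ℝ :=
  -∑' x, P x * Real.log (P x)

/-- The Poisson(l) probability mass function on ℕ. -/
noncomputable def poissonPMF (l : ℝ) (k : ℕ) : ℝ :=
  Real.exp (-l) * l ^ k / (Nat.factorial k)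

/-- The scaled score function `ρ_X(x) = (x+1)P(x+1)/(λ P(x)) - 1`. -/
noncomputable def scaledScore (P : ℕ → ℝ) (l : ℝ) (x : ℕ) : ℝ :=
  ((x + 1 : ℕ) : ℝ) * P (x + 1) / (l * P x) - 1

/-- The scaled Fisher information `K(X) = λ E[ρ_X(X)²]`. -/
noncomputable def scaledFisher (P : ℕ → ℝ) (l : ℝ) : ℝ :=
  l * ∑' x, P x * (scaledScore P l x) ^ 2

/-- Total variation distance `‖P - Q‖_TV = ∑ₓ |P(x) - Q(x)|`. -/
noncomputable def tvDist {α : Type*} (P Q : α → ℝ) : ℝ :=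
  ∑' x, |P x - Q x|

/-! The relative entropy is at most the logarithm of the second moment `∑ P² / Q`, which by
Cauchy-Schwarz only decreases when weights are pushed forward. The law `Po(1)` dominates the image
of the weight `e⁻¹ n ^ (-∑ xᵢ)` on `{0,1}ⁿ` under `x ↦ ∑ xᵢ`, because `(n choose k) n⁻ᵏ ≤ 1 / k!`,
so it suffices to bound the second moment of the law of the whole path against that weight. There
it is a sum over paths of products of transition weights, hence a bilinear form in a matrix power,
and a positive supersolution of the `2 × 2` transfer matrix bounds it by `exp (4 / n)`.
-/

section RelativeEntropy

lemma mul_log_div_le {p q : ℝ} (hp : 0 ≤ p) (hq : 0 < q) (t : ℝ) :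
    p * log (p / q) ≤ p * (t - 1) + exp (-t) * (p ^ 2 / q) := by
  rcases hp.eq_or_lt with rfl | hp
  · simp
  have hpq : 0 < p / q := div_pos hp hq
  -- The tangent line of `log` at `exp t`.
  have htangent : log (p / q) ≤ t - 1 + exp (-t) * (p / q) := by
    have h := log_le_sub_one_of_pos (mul_pos (exp_pos (-t)) hpq)
    rw [log_mul (exp_pos _).ne' hpq.ne', log_exp] at h
    linarith
  calc p * log (p / q) ≤ p * (t - 1 + exp (-t) * (p / q)) := by gcongr
    _ = p * (t - 1) + exp (-t) * (p ^ 2 / q) := by ring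

lemma relEnt_le_of_sum_sq_div_le_exp {α : Type*} {P Q : α → ℝ} {s : Finset α} {t : ℝ}
    (hP : ∀ a ∈ s, 0 ≤ P a) (hQ : ∀ a ∈ s, 0 < Q a) (hs : ∀ a ∉ s, P a = 0)
    (hsum : ∑ a ∈ s, P a = 1) (hsq : ∑ a ∈ s, P a ^ 2 / Q a ≤ exp t) : relEnt P Q ≤ t :=
  calc relEnt P Q = ∑ a ∈ s, P a * log (P a / Q a) :=
        tsum_eq_sum fun a ha => by rw [hs a ha, zero_mul]
    _ ≤ ∑ a ∈ s, (P a * (t - 1) + exp (-t) * (P a ^ 2 / Q a)) :=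
        Finset.sum_le_sum fun a ha => mul_log_div_le (hP a ha) (hQ a ha) t
    _ = t - 1 + exp (-t) * ∑ a ∈ s, P a ^ 2 / Q a := by
        rw [Finset.sum_add_distrib, ← Finset.sum_mul, hsum, one_mul, Finset.mul_sum]
    _ ≤ t - 1 + exp (-t) * exp t := by gcongr
    _ = t := by rw [← exp_add, neg_add_cancel, exp_zero, sub_add_cancel]

lemma sum_image_sq_sum_div_le {α β : Type*} [Fintype α] [DecidableEq β] (f : α → β)
    (p : α → ℝ) {q : α → ℝ} {Q : β → ℝ} (hq : ∀ a, 0 < q a)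
    (hQ : ∀ b, ∑ a with f a = b, q a ≤ Q b) :
    ∑ b ∈ Finset.univ.image f, (∑ a with f a = b, p a) ^ 2 / Q b ≤ ∑ a, p a ^ 2 / q a := by
  have hpos : ∀ b ∈ Finset.univ.image f, 0 < ∑ a with f a = b, q a := fun b hb => by
    obtain ⟨a, -, rfl⟩ := Finset.mem_image.1 hb
    exact Finset.sum_pos (fun a _ => hq a) ⟨a, by simp⟩
  calc ∑ b ∈ Finset.univ.image f, (∑ a with f a = b, p a) ^ 2 / Q b
      ≤ ∑ b ∈ Finset.univ.image f, (∑ a with f a = b, p a) ^ 2 / ∑ a with f a = b, q a :=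
        Finset.sum_le_sum fun b hb =>
          div_le_div_of_nonneg_left (sq_nonneg _) (hpos b hb) (hQ b)
    _ ≤ ∑ b ∈ Finset.univ.image f, ∑ a with f a = b, p a ^ 2 / q a :=
        Finset.sum_le_sum fun b _ => Finset.sq_sum_div_le_sum_sq_div _ _ fun a _ => hq a
    _ = ∑ a, p a ^ 2 / q a :=
        Finset.sum_fiberwise_of_maps_to (fun a ha => Finset.mem_image_of_mem f ha) _

variable {Ω α β : Type*} [MeasurableSpace Ω] [MeasurableSpace α] [MeasurableSingletonClass α]
  {μ : Measure Ω} {Y : Ω → α}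

lemma sum_distOf_eq_measureReal_preimage [IsFiniteMeasure μ] (hY : Measurable Y) (s : Finset α) :
    ∑ a ∈ s, distOf μ Y a = μ.real (Y ⁻¹' s) :=
  sum_measureReal_preimage_singleton s fun a _ => hY (measurableSet_singleton a)

lemma distOf_comp_eq_sum [IsFiniteMeasure μ] [Fintype α] [DecidableEq β] (hY : Measurable Y)
    (f : α → β) (b : β) : distOf μ (f ∘ Y) b = ∑ a with f a = b, distOf μ Y a := by
  rw [sum_distOf_eq_measureReal_preimage hY, Finset.coe_filter_univ]
  rfl

lemma sum_image_distOf_comp_eq_one [IsProbabilityMeasure μ] [Fintype α] [DecidableEq β]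
    (hY : Measurable Y) (f : α → β) :
    ∑ b ∈ Finset.univ.image f, distOf μ (f ∘ Y) b = 1 := by
  simp only [distOf_comp_eq_sum hY]
  rw [Finset.sum_fiberwise_of_maps_to fun a ha => Finset.mem_image_of_mem f ha,
    sum_distOf_eq_measureReal_preimage hY, Finset.coe_univ, Set.preimage_univ, probReal_univ]

lemma relEnt_distOf_comp_le [IsProbabilityMeasure μ] [Fintype α] [DecidableEq β]
    (hY : Measurable Y) (f : α → β) {q : α → ℝ} {Q : β → ℝ} {t : ℝ} (hq : ∀ a, 0 < q a)
    (hQ : ∀ b, ∑ a with f a = b, q a ≤ Q b) (ht : ∑ a, distOf μ Y a ^ 2 / q a ≤ exp t) :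
    relEnt (distOf μ (f ∘ Y)) Q ≤ t := by
  refine relEnt_le_of_sum_sq_div_le_exp (s := Finset.univ.image f)
    (fun b _ => ENNReal.toReal_nonneg) (fun b hb => ?_) (fun b hb => ?_)
    (sum_image_distOf_comp_eq_one hY f) ?_
  · obtain ⟨a, -, rfl⟩ := Finset.mem_image.1 hb
    exact (Finset.sum_pos (fun a _ => hq a) ⟨a, by simp⟩).trans_le (hQ _)
  · rw [distOf_comp_eq_sum hY, Finset.filter_false_of_mem, Finset.sum_empty]
    rintro a ha rfl
    exact hb (Finset.mem_image_of_mem f ha)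
  · simp only [distOf_comp_eq_sum hY]
    exact (sum_image_sq_sum_div_le f _ hq hQ).trans ht

end RelativeEntropy

section Poisson

lemma card_filter_sum_fin_two_eq (ι : Type*) [Fintype ι] [DecidableEq ι] (k : ℕ) :
    Finset.card {x : ι → Fin 2 | ∑ i, (x i : ℕ) = k} = (Fintype.card ι).choose k := by
  have hval : ∀ a : Fin 2, (a : ℕ) = if a = 1 then 1 else 0 := by decide
  rw [← Finset.card_univ, ← Finset.card_powersetCard]
  refine Finset.card_nbij' (fun x => ({i | x i = 1} : Finset ι))
    (fun s i => if i ∈ s then 1 else 0) (fun x hx => ?_) (fun s hs => ?_) (fun x _ => ?_)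
    (fun s _ => ?_)
  · simpa only [Finset.mem_coe, Finset.mem_filter_univ, Finset.mem_powersetCard_univ,
      Finset.card_filter, hval] using hx
  · simpa [apply_ite] using hs
  · ext i
    simp [hval (x i), apply_ite]
  · simp

lemma sum_exp_neg_mul_pow_le_poissonPMF {n : ℕ} {l : ℝ} (hn : 0 < n) (hl : 0 ≤ l) (k : ℕ) :
    ∑ x : Fin n → Fin 2 with ∑ i, (x i : ℕ) = k, exp (-l) * (l / n) ^ ∑ i, (x i : ℕ) ≤
      _root_.poissonPMF l k :=
  calc ∑ x : Fin n → Fin 2 with ∑ i, (x i : ℕ) = k, exp (-l) * (l / n) ^ ∑ i, (x i : ℕ)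
      = n.choose k * (exp (-l) * (l / n) ^ k) := by
        rw [Finset.sum_congr rfl fun x hx => by rw [(Finset.mem_filter.1 hx).2],
          Finset.sum_const, card_filter_sum_fin_two_eq, Fintype.card_fin, nsmul_eq_mul]
    _ ≤ n ^ k / k.factorial * (exp (-l) * (l / n) ^ k) := by
        gcongr
        exact Nat.choose_le_pow_div k n
    _ = _root_.poissonPMF l k := by
        rw [_root_.poissonPMF, div_pow]
        field_simp

lemma relEnt_distOf_sum_poissonPMF_le {Ω : Type*} [MeasurableSpace Ω] {μ : Measure Ω}
    [IsProbabilityMeasure μ] {n : ℕ} {l t : ℝ} {Y : Ω → Fin n → Fin 2} (hY : Measurable Y)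
    (hn : 0 < n) (hl : 0 < l)
    (ht : ∑ x, distOf μ Y x ^ 2 * (n / l) ^ ∑ i, (x i : ℕ) ≤ exp (t - l)) :
    relEnt (distOf μ fun ω => ∑ i, (Y ω i : ℕ)) (_root_.poissonPMF l) ≤ t := by
  refine relEnt_distOf_comp_le hY (fun x => ∑ i, (x i : ℕ)) (fun x => by positivity)
    (sum_exp_neg_mul_pow_le_poissonPMF hn hl.le) ?_
  calc ∑ x, distOf μ Y x ^ 2 / (exp (-l) * (l / n) ^ ∑ i, (x i : ℕ))
      = exp l * ∑ x, distOf μ Y x ^ 2 * (n / l) ^ ∑ i, (x i : ℕ) := by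
        rw [Finset.mul_sum]
        refine Finset.sum_congr rfl fun x _ => ?_
        rw [← inv_div l, inv_pow, exp_neg]
        field_simp
    _ ≤ exp l * exp (t - l) := by gcongr
    _ = exp t := by rw [← exp_add, add_sub_cancel]

end Poisson

section TransferMatrix

open Matrix

variable {α R : Type*} [CommSemiring R]

/-- The weight `w(x₀) M(x₀, x₁) ⋯ M(x_{m-1}, x_m)` of the path `x` for the initial weight `w` and
the transfer matrix `M`. If `w` is a probability vector and `M` is stochastic, this is the law of
the first `m + 1` states of the Markov chain. -/
def pathWeight {m : ℕ} (w : α → R) (M : Matrix α α R) (x : Fin (m + 1) → α) : R :=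
  w (x 0) * ∏ i : Fin m, M (x i.castSucc) (x i.succ)

lemma pathWeight_eq_prod_range {m : ℕ} (w : α → R) (M : Matrix α α R)
    (x : Fin (m + 1) → α) :
    pathWeight w M x = w (x (Fin.ofNat (m + 1) 0)) *
      ∏ i ∈ Finset.range m, M (x (Fin.ofNat (m + 1) i)) (x (Fin.ofNat (m + 1) (i + 1))) := by
  rw [pathWeight, Finset.prod_range, Fin.ofNat_zero]
  refine congrArg _ (Finset.prod_congr rfl fun i _ => ?_)
  rw [← i.val_succ, ← i.val_castSucc, Fin.ofNat_val_eq_self, Fin.ofNat_val_eq_self]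

lemma pathWeight_cons {m : ℕ} (w : α → R) (M : Matrix α α R) (a : α)
    (x : Fin (m + 1) → α) : pathWeight w M (Fin.cons a x : Fin (m + 2) → α) =
      w a * pathWeight (M a) M x := by
  simp [pathWeight, Fin.prod_univ_succ]

lemma sum_pathWeight_mul [Fintype α] [DecidableEq α] (m : ℕ) (w : α → R)
    (M : Matrix α α R) (v : α → R) :
    ∑ x : Fin (m + 1) → α, pathWeight w M x * v (x (Fin.last m)) = w ⬝ᵥ M ^ m *ᵥ v := by
  induction m generalizing w with
  | zero =>
    rw [← (Equiv.funUnique (Fin 1) α).symm.sum_comp]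
    simp [pathWeight, dotProduct]
  | succ m ih =>
    have hcons (a : α) : ∑ x : Fin (m + 1) → α, pathWeight w M (Fin.cons a x : Fin (m + 2) → α) *
        v ((Fin.cons a x : Fin (m + 2) → α) (Fin.last (m + 1))) =
          w a * (M a ⬝ᵥ M ^ m *ᵥ v) := by
      simp only [pathWeight_cons, ← Fin.succ_last, Fin.cons_succ, mul_assoc, ← Finset.mul_sum, ih]
    rw [← (Fin.consEquiv fun _ => α).sum_comp, Fintype.sum_prod_type, pow_succ', ← mulVec_mulVec]
    exact Finset.sum_congr rfl fun a _ => hcons a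

lemma pathWeight_sq_mul_prod {m : ℕ} (w g : α → R) (M : Matrix α α R)
    (x : Fin (m + 1) → α) :
    pathWeight w M x ^ 2 * ∏ i, g (x i) =
      pathWeight (fun a => w a ^ 2 * g a) (of fun a b => M a b ^ 2 * g b) x := by
  simp only [pathWeight, of_apply, Fin.prod_univ_succ, Finset.prod_mul_distrib, Finset.prod_pow]
  ring

variable [PartialOrder R] [IsOrderedRing R]

lemma pathWeight_nonneg {m : ℕ} {w : α → R} {M : Matrix α α R} (hw : 0 ≤ w)
    (hM : ∀ a b, 0 ≤ M a b) (x : Fin (m + 1) → α) : 0 ≤ pathWeight w M x :=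
  mul_nonneg (hw _) (Finset.prod_nonneg fun _ _ => hM _ _)

variable [Fintype α]

lemma pow_mulVec_le_pow_smul [DecidableEq α] {M : Matrix α α R} {v : α → R} {r : R}
    (hM : ∀ a b, 0 ≤ M a b) (hr : 0 ≤ r) (hv : M *ᵥ v ≤ r • v) (m : ℕ) :
    M ^ m *ᵥ v ≤ r ^ m • v := by
  induction m with
  | zero => simp
  | succ m ih =>
    calc M ^ (m + 1) *ᵥ v = M *ᵥ (M ^ m *ᵥ v) := by rw [pow_succ', mulVec_mulVec]
      _ ≤ M *ᵥ (r ^ m • v) := fun a => dotProduct_le_dotProduct_of_nonneg_left ih (hM a)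
      _ = r ^ m • (M *ᵥ v) := mulVec_smul _ _ _
      _ ≤ r ^ m • (r • v) := smul_le_smul_of_nonneg_left hv (pow_nonneg hr m)
      _ = r ^ (m + 1) • v := by rw [smul_smul, pow_succ]

lemma sum_pathWeight_le {w v : α → R} {M : Matrix α α R} {r : R} (hw : 0 ≤ w)
    (hM : ∀ a b, 0 ≤ M a b) (hr : 0 ≤ r) (hv : 1 ≤ v) (hMv : M *ᵥ v ≤ r • v) (m : ℕ) :
    ∑ x : Fin (m + 1) → α, pathWeight w M x ≤ r ^ m * (w ⬝ᵥ v) := by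
  classical
  calc ∑ x : Fin (m + 1) → α, pathWeight w M x
      ≤ ∑ x : Fin (m + 1) → α, pathWeight w M x * v (x (Fin.last m)) :=
        Finset.sum_le_sum fun x _ => le_mul_of_one_le_right (pathWeight_nonneg hw hM x) (hv _)
    _ = w ⬝ᵥ M ^ m *ᵥ v := sum_pathWeight_mul m w M v
    _ ≤ w ⬝ᵥ (r ^ m • v) :=
        dotProduct_le_dotProduct_of_nonneg_left (pow_mulVec_le_pow_smul hM hr hMv m) hw
    _ = r ^ m * (w ⬝ᵥ v) := dotProduct_smul _ _ _

end TransferMatrix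

section TwoStateChain

open Matrix

/-- The stationary law Bernoulli(`1 / n`) of the two-state chain, for a real parameter `n`. -/
noncomputable def chainInit (n : ℝ) : Fin 2 → ℝ := ![1 - 1 / n, 1 / n]

/-- The transition matrix of the two-state chain, for a real parameter `n`. -/
noncomputable def chainKernel (n : ℝ) : Matrix (Fin 2) (Fin 2) ℝ :=
  !![n / (n + 1), 1 / (n + 1); (n - 1) / (n + 1), 2 / (n + 1)]

/-- The initial weight of the second moment of the path law of the chain against the weight
`n ^ (-∑ xᵢ)`. -/
noncomputable def chainSqInit (n : ℝ) (a : Fin 2) : ℝ := chainInit n a ^ 2 * n ^ (a : ℕ)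

/-- The transfer matrix of the second moment of the path law of the chain against the weight
`n ^ (-∑ xᵢ)`. -/
noncomputable def chainSqKernel (n : ℝ) : Matrix (Fin 2) (Fin 2) ℝ :=
  of fun a b => chainKernel n a b ^ 2 * n ^ (b : ℕ)

/-- An upper bound for the growth rate of the powers of `chainSqKernel n`: the value that makes the
first coordinate of `chainSqKernel n *ᵥ chainSuper n ≤ chainRate n • chainSuper n` an equality. -/
noncomputable def chainRate (n : ℝ) : ℝ := 1 - (n - 2) / (n + 1) ^ 2

/-- A positive supersolution of `chainSqKernel n`, approximating its Perron eigenvector. Any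
coefficient `c` in `1 + c / n` gives the rate `1 - (n + 1 - c) / (n + 1) ^ 2`; the choice `3` also
covers the second coordinate. -/
noncomputable def chainSuper (n : ℝ) : Fin 2 → ℝ := ![1, 1 + 3 / n]

variable {n : ℝ}

lemma one_le_chainSuper (hn : 0 < n) : 1 ≤ chainSuper n := by
  have : 0 ≤ 3 / n := by positivity
  intro a
  fin_cases a <;> simp [chainSuper, this]

lemma chainRate_nonneg (hn : 0 < n) : 0 ≤ chainRate n := by
  rw [chainRate, sub_nonneg, div_le_one (by positivity)]
  nlinarith

lemma chainSqKernel_mulVec_chainSuper_le (hn : 0 < n) :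
    chainSqKernel n *ᵥ chainSuper n ≤ chainRate n • chainSuper n := by
  have hzero : (n / (n + 1)) ^ 2 + (1 / (n + 1)) ^ 2 * n * (1 + 3 / n) = chainRate n := by
    rw [chainRate]
    field_simp
    ring
  have hone : ((n - 1) / (n + 1)) ^ 2 + (2 / (n + 1)) ^ 2 * n * (1 + 3 / n) ≤
      chainRate n * (1 + 3 / n) := by
    have hdiff : chainRate n * (1 + 3 / n) -
        (((n - 1) / (n + 1)) ^ 2 + (2 / (n + 1)) ^ 2 * n * (1 + 3 / n)) =
          (2 * n ^ 2 - 7 * n + 9) / ((n + 1) ^ 2 * n) := by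
      rw [chainRate]
      field_simp
      ring
    have hnum : 0 ≤ 2 * n ^ 2 - 7 * n + 9 := by nlinarith [sq_nonneg (4 * n - 7)]
    rw [← sub_nonneg, hdiff]
    positivity
  intro a
  fin_cases a
  · simpa [chainSqKernel, chainKernel, chainSuper, mulVec, dotProduct] using hzero.le
  · simpa [chainSqKernel, chainKernel, chainSuper, mulVec, dotProduct] using hone

lemma chainSqInit_dotProduct_chainSuper (hn : 0 < n) :
    chainSqInit n ⬝ᵥ chainSuper n = 1 - 1 / n + 4 / n ^ 2 := by
  simp only [dotProduct, Fin.sum_univ_two, chainSqInit, chainInit, chainSuper, cons_val_zero,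
    cons_val_one, Fin.val_zero, Fin.val_one]
  field_simp
  ring

lemma sum_pathWeight_chainSq_le (hn : 0 < n) (m : ℕ) :
    ∑ x : Fin (m + 1) → Fin 2, pathWeight (chainSqInit n) (chainSqKernel n) x ≤
      chainRate n ^ m * (1 - 1 / n + 4 / n ^ 2) := by
  rw [← chainSqInit_dotProduct_chainSuper hn]
  refine sum_pathWeight_le (fun a => ?_) (fun a b => ?_) (chainRate_nonneg hn)
    (one_le_chainSuper hn) (chainSqKernel_mulVec_chainSuper_le hn) m
  · exact mul_nonneg (sq_nonneg _) (pow_nonneg hn.le _)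
  · exact mul_nonneg (sq_nonneg _) (pow_nonneg hn.le _)

lemma chainRate_pow_mul_le_exp {m : ℕ} (hn : n = m + 1) :
    chainRate n ^ m * (1 - 1 / n + 4 / n ^ 2) ≤ exp (4 / n - 1) := by
  have hm : (m : ℝ) = n - 1 := by linarith
  have hn1 : 1 ≤ n := by linarith [m.cast_nonneg (α := ℝ)]
  have hrate : chainRate n ≤ exp (-((n - 2) / (n + 1) ^ 2)) := one_sub_le_exp_neg _
  have hinit : 1 - 1 / n + 4 / n ^ 2 ≤ exp (-(1 / n) + 4 / n ^ 2) := by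
    linarith [add_one_le_exp (-(1 / n) + 4 / n ^ 2)]
  have hexponent : m * -((n - 2) / (n + 1) ^ 2) + (-(1 / n) + 4 / n ^ 2) ≤ 4 / n - 1 := by
    have hdiff : 4 / n - 1 - (m * -((n - 2) / (n + 1) ^ 2) + (-(1 / n) + 4 / n ^ 2)) =
        (n - 1) * (7 * n + 4) / (n ^ 2 * (n + 1) ^ 2) := by
      rw [hm]
      field_simp
      ring
    have : 0 ≤ n - 1 := by linarith
    rw [← sub_nonneg, hdiff]
    positivity
  calc chainRate n ^ m * (1 - 1 / n + 4 / n ^ 2)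
      ≤ exp (-((n - 2) / (n + 1) ^ 2)) ^ m * exp (-(1 / n) + 4 / n ^ 2) :=
        have hrate0 : 0 ≤ chainRate n := chainRate_nonneg (by linarith)
        mul_le_mul_of_nonneg (pow_le_pow_left₀ hrate0 hrate m) hinit (pow_nonneg hrate0 m)
          (exp_pos _).le
    _ = exp (m * -((n - 2) / (n + 1) ^ 2) + (-(1 / n) + 4 / n ^ 2)) := by
        rw [← exp_nat_mul, ← exp_add]
    _ ≤ exp (4 / n - 1) := exp_le_exp.2 hexponent

lemma sum_pathWeight_chain_sq_mul_pow_le {m : ℕ} (hn : n = m + 1) :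
    ∑ x : Fin (m + 1) → Fin 2,
      pathWeight (chainInit n) (chainKernel n) x ^ 2 * n ^ ∑ i, (x i : ℕ) ≤ exp (4 / n - 1) := by
  have hn0 : 0 < n := hn ▸ m.cast_add_one_pos
  refine le_trans (le_of_eq ?_)
    ((sum_pathWeight_chainSq_le hn0 m).trans (chainRate_pow_mul_le_exp hn))
  refine Finset.sum_congr rfl fun x _ => ?_
  rw [← Finset.prod_pow_eq_pow_sum]
  exact pathWeight_sq_mul_prod _ (fun a : Fin 2 => n ^ (a : ℕ)) _ x

lemma relEnt_distOf_sum_chain_le {Ω : Type*} [MeasurableSpace Ω] {μ : Measure Ω}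
    [IsProbabilityMeasure μ] {m : ℕ} {Y : Ω → Fin (m + 1) → Fin 2} (hY : Measurable Y)
    (hn : n = m + 1) (hlaw : ∀ x, distOf μ Y x = pathWeight (chainInit n) (chainKernel n) x) :
    relEnt (distOf μ fun ω => ∑ i, (Y ω i : ℕ)) (_root_.poissonPMF 1) ≤ 4 / n := by
  refine relEnt_distOf_sum_poissonPMF_le hY m.succ_pos one_pos ?_
  simp only [hlaw, div_one, Nat.cast_add, Nat.cast_one, ← hn]
  exact sum_pathWeight_chain_sq_mul_pow_le hn

lemma chainInit_apply (n : ℝ) (a : Fin 2) :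
    chainInit n a = if (a : ℕ) = 1 then 1 / n else 1 - 1 / n := by
  fin_cases a <;> rfl

lemma chainKernel_apply (n : ℝ) (a b : Fin 2) :
    chainKernel n a b =
      if (a : ℕ) = 0 then (if (b : ℕ) = 0 then n / (n + 1) else 1 / (n + 1))
      else (if (b : ℕ) = 0 then (n - 1) / (n + 1) else 2 / (n + 1)) := by
  fin_cases a <;> fin_cases b <;> rfl

end TwoStateChain

lemma distOf_fin_ofNat_eq {Ω : Type*} [MeasurableSpace Ω] {μ : Measure Ω} {n k : ℕ} [NeZero n]
    [NeZero k] {X : ℕ → Ω → ℕ} (hX : ∀ i ω, X i ω < k) (x : Fin n → Fin k) :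
    distOf μ (fun ω (i : Fin n) => Fin.ofNat k (X i ω)) x =
      (μ {ω | ∀ i, i < n → X i ω = x (Fin.ofNat n i)}).toReal := by
  rw [distOf]
  congr 2 with ω
  simp only [Set.mem_ofPred_eq, funext_iff, Fin.ext_iff, Fin.forall_iff, Fin.val_ofNat,
    Nat.mod_eq_of_lt (hX _ _)]
  refine forall₂_congr fun i hi => ?_
  rw [← Fin.ofNat_val_eq_self ⟨i, hi⟩]

lemma four_div_le_three_mul_log_div_add {x : ℝ} (hx : 3 ≤ x) :
    4 / x ≤ 3 * log x / x + 1 / x := by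
  have hx0 : 0 < x := by linarith
  have hlog : 1 ≤ log x := (le_log_iff_exp_le hx0).2 (exp_one_lt_three.le.trans hx)
  rw [← add_div]
  gcongr
  linarith

theorem poisson_approx_markov_chain_general {Ω : Type*} [MeasurableSpace Ω]
    (μ : Measure Ω) [IsProbabilityMeasure μ]
    (n : ℕ) (hn : 0 < n)
    (X : ℕ → Ω → ℕ)
    (hmeas : ∀ i, Measurable (X i))
    (hbin : ∀ i ω, X i ω ≤ 1)
    (hjoint : ∀ x : ℕ → ℕ, (∀ i, i < n → x i ≤ 1) →
      (μ {ω | ∀ i, i < n → X i ω = x i}).toReal =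
        (if x 0 = 1 then (1 : ℝ) / n else 1 - 1 / n) *
          ∏ i ∈ Finset.range (n - 1),
            (if x i = 0 then
              (if x (i + 1) = 0 then (n : ℝ) / (n + 1) else 1 / (n + 1))
            else
              (if x (i + 1) = 0 then ((n : ℝ) - 1) / (n + 1) else 2 / (n + 1)))) :
    relEnt (distOf μ (fun ω => ∑ i ∈ Finset.range n, X i ω)) (poissonPMF 1) ≤ 4 / n := by
  obtain ⟨m, rfl⟩ := Nat.exists_eq_add_one.2 hn
  have hX (i : ℕ) (ω : Ω) : X i ω < 2 := Nat.lt_succ_of_le (hbin i ω)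
  have hY : Measurable fun ω (i : Fin (m + 1)) => Fin.ofNat 2 (X i ω) :=
    measurable_pi_lambda _ fun i => Measurable.of_discrete.comp (hmeas i) (g := Fin.ofNat 2)
  have hlaw (x : Fin (m + 1) → Fin 2) :
      distOf μ (fun ω (i : Fin (m + 1)) => Fin.ofNat 2 (X i ω)) x =
        pathWeight (chainInit (m + 1 : ℕ)) (chainKernel (m + 1 : ℕ)) x := by
    rw [distOf_fin_ofNat_eq hX, hjoint _ fun i _ => Nat.le_of_lt_succ (Fin.is_lt _)]
    simp only [pathWeight_eq_prod_range, chainInit_apply, chainKernel_apply, add_tsub_cancel_right]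
  simpa only [Finset.sum_range, Fin.val_ofNat, Nat.mod_eq_of_lt (hX _ _)] using
    relEnt_distOf_sum_chain_le hY (by simp) hlaw

/-- The Markov chain example: if `(X₀,…,X_{n-1})` is a stationary two-state Markov chain
on `{0,1}` with transition probabilities `K(0,1) = 1/(n+1)`, `K(0,0) = n/(n+1)`,
`K(1,1) = 2/(n+1)`, `K(1,0) = (n-1)/(n+1)` and stationary Bernoulli(1/n) marginals, then
`D(P_{S_n} ‖ Po(1)) ≤ 3 (log n)/n + 1/n` for `n ≥ 3`. -/
theorem poisson_approx_markov_chain {Ω : Type*} [MeasurableSpace Ω]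
    (μ : Measure Ω) [IsProbabilityMeasure μ]
    (n : ℕ) (hn : 3 ≤ n)
    (X : ℕ → Ω → ℕ)
    (hmeas : ∀ i, Measurable (X i))
    (hbin : ∀ i ω, X i ω ≤ 1)
    (hjoint : ∀ x : ℕ → ℕ, (∀ i, i < n → x i ≤ 1) →
      (μ {ω | ∀ i, i < n → X i ω = x i}).toReal =
        (if x 0 = 1 then (1 : ℝ) / n else 1 - 1 / n) *
          ∏ i ∈ Finset.range (n - 1),
            (if x i = 0 then
              (if x (i + 1) = 0 then (n : ℝ) / (n + 1) else 1 / (n + 1))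
            else
              (if x (i + 1) = 0 then ((n : ℝ) - 1) / (n + 1) else 2 / (n + 1)))) :
    relEnt (distOf μ (fun ω => ∑ i ∈ Finset.range n, X i ω)) (poissonPMF 1) ≤
      3 * Real.log n / n + 1 / n :=
  (poisson_approx_markov_chain_general μ n (by omega) X hmeas hbin hjoint).trans
    (four_div_le_three_mul_log_div_add (by exact_mod_cast hn))
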